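/- Let μ be a probability measure on B(0,1) ⊂ ℝ^d, s ∈ (0,d), ε ∈ (0,1/2], δ > 0 small enough. If I_s^δ(μ) ≤ δ^{-ε}, then there exists a Borel set A with μ(A) ≥ 1 − (log 1/δ)·δ^ε such that the restricted measure μ|_A satisfies μ|_A(B(x,r)) ≤ δ^{-2ε} r^s (up to an absolute multiplicative constant) for every x ∈ ℝ^d and every r ∈ [δ,1]. -/

import Mathlib

open MeasureTheory

/-!
If `|x - z| ≤ δ` and `|y - w| ≤ δ`, then `|x - y| ≤ |z - w| + 2δ`; hence `I_s(μ * P_δ)` dominates,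
up to the factor `(∫ P)²`, the integral against `μ` of the regularized potential
`U(z) = ∫ (|z - w| + 2δ)^{-s} dμ(w)`. By Markov's inequality `U` is below
`T = 4^{-s} δ^{-2ε}` off a set of measure `≲ δ^ε`, and the dimensional constant is absorbed by
`log (1/δ)`. A ball `B(x, r)` with `r ≥ δ` that meets `{U < T}` in a point `z` satisfies
`|z - w| + 2δ ≤ 4r` for all its points `w`, so `(4r)^{-s} μ(B(x, r)) ≤ U(z) < T`.
-/

open Metric Module Set
open scoped ENNReal

theorem antitone_ennreal_rpow_neg {s : ℝ} (hs : 0 ≤ s) : Antitone fun a : ℝ≥0∞ => a ^ (-s) := by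
  intro a b hab
  simp only [ENNReal.rpow_neg]
  gcongr

theorem measurable_of_antitone_comp {X : Type*} [MeasurableSpace X] {f g : X → ℝ}
    (hg : Measurable g) (hfg : ∀ x y, g x ≤ g y → f y ≤ f x) : Measurable f := by
  refine measurable_of_Ioi fun a => ?_
  have hpre : f ⁻¹' Ioi a = g ⁻¹' lowerClosure (g '' (f ⁻¹' Ioi a)) := by
    refine Subset.antisymm (fun x hx => subset_lowerClosure (mem_image_of_mem g hx)) ?_
    rintro x ⟨_, ⟨y, hy, rfl⟩, hxy⟩
    exact lt_of_lt_of_le hy (hfg x y hxy)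
  rw [hpre]
  exact hg (lowerClosure _).lower.ordConnected.measurableSet

theorem conv_withDensity_right {G : Type*} [AddCommGroup G] [MeasurableSpace G] [MeasurableAdd₂ G]
    [MeasurableSub₂ G] (μ ν : Measure G) [SFinite μ] [SFinite ν] [ν.IsAddLeftInvariant]
    {p : G → ℝ≥0∞} (hp : Measurable p) :
    μ ∗ ν.withDensity p = ν.withDensity fun x => ∫⁻ z, p (x - z) ∂μ := by
  refine Measure.ext_of_lintegral _ fun f hf => ?_
  have hconv : Measurable fun x => ∫⁻ z, p (x - z) ∂μ :=
    Measurable.lintegral_prod_right' (f := fun q : G × G => p (q.1 - q.2)) (by fun_prop)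
  calc ∫⁻ x, f x ∂(μ ∗ ν.withDensity p)
      = ∫⁻ z, ∫⁻ u, p u * f (z + u) ∂ν ∂μ := by
        rw [Measure.lintegral_conv hf]
        refine lintegral_congr fun z => ?_
        exact lintegral_withDensity_eq_lintegral_mul _ hp (by fun_prop)
    _ = ∫⁻ z, ∫⁻ x, p (x - z) * f x ∂ν ∂μ := by
        refine lintegral_congr fun z => ?_
        rw [← lintegral_add_left_eq_self (fun x => p (x - z) * f x) z]
        simp
    _ = ∫⁻ x, (∫⁻ z, p (x - z) ∂μ) * f x ∂ν := by
        rw [lintegral_lintegral_swap (by fun_prop)]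
        exact lintegral_congr fun x => lintegral_mul_const _ (by fun_prop)
    _ = ∫⁻ x, f x ∂ν.withDensity fun x => ∫⁻ z, p (x - z) ∂μ :=
        (lintegral_withDensity_eq_lintegral_mul _ hconv hf).symm

section Riesz

variable {X : Type*} [PseudoMetricSpace X] [MeasurableSpace X]

/-- The Riesz potential `z ↦ ∫ |z - w|^{-s} dμ(w)`, regularized at scale `ρ` by adding `ρ` to the
distance. For `ρ = 0` and `s > 0` the kernel is `∞` on the diagonal. -/
noncomputable def rieszPotential (s : ℝ) (ρ : ℝ≥0∞) (μ : Measure X) (z : X) : ℝ≥0∞ :=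
  ∫⁻ w, (edist z w + ρ) ^ (-s) ∂μ

/-- The Riesz energy of `μ`, regularized at scale `ρ`; the energy `I_s(μ)` is the case `ρ = 0`. -/
noncomputable def rieszEnergy (s : ℝ) (ρ : ℝ≥0∞) (μ : Measure X) : ℝ≥0∞ :=
  ∫⁻ z, rieszPotential s ρ μ z ∂μ

variable [OpensMeasurableSpace X]

theorem rpow_neg_mul_measure_closedBall_le_rieszPotential {s : ℝ} (hs : 0 ≤ s) (ρ : ℝ≥0∞)
    (μ : Measure X) {x z : X} {r : ℝ} (hz : z ∈ closedBall x r) :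
    (ENNReal.ofReal (2 * r) + ρ) ^ (-s) * μ (closedBall x r) ≤ rieszPotential s ρ μ z := by
  rw [← setLIntegral_const]
  refine (setLIntegral_mono' measurableSet_closedBall fun w hw => ?_).trans
    (setLIntegral_le_lintegral (closedBall x r) _)
  have hzw : edist z w ≤ ENNReal.ofReal (2 * r) := by
    rw [edist_dist]
    refine ENNReal.ofReal_le_ofReal ?_
    linarith [dist_triangle_right z w x, mem_closedBall.1 hz, mem_closedBall.1 hw]
  exact antitone_ennreal_rpow_neg hs (by gcongr)

theorem measure_closedBall_le_of_rieszPotential_lt {s : ℝ} (hs : 0 ≤ s) {μ : Measure X}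
    {x z : X} {δ r T : ℝ} (hδ : 0 < δ) (hr : δ ≤ r) (hz : z ∈ closedBall x r)
    (hT : rieszPotential s (2 * ENNReal.ofReal δ) μ z < ENNReal.ofReal T) :
    μ (closedBall x r) ≤ ENNReal.ofReal ((4 * r) ^ s * T) := by
  have hr0 : 0 < r := hδ.trans_le hr
  have hscale : ENNReal.ofReal (2 * r) + 2 * ENNReal.ofReal δ ≤ ENNReal.ofReal (4 * r) := by
    rw [← ENNReal.ofReal_ofNat 2, ← ENNReal.ofReal_mul (by norm_num),
      ← ENNReal.ofReal_add (by positivity) (by positivity)]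
    exact ENNReal.ofReal_le_ofReal (by linarith)
  have hball : ENNReal.ofReal ((4 * r) ^ (-s)) * μ (closedBall x r) ≤ ENNReal.ofReal T := by
    rw [← ENNReal.ofReal_rpow_of_pos (by positivity)]
    calc ENNReal.ofReal (4 * r) ^ (-s) * μ (closedBall x r)
        ≤ (ENNReal.ofReal (2 * r) + 2 * ENNReal.ofReal δ) ^ (-s) * μ (closedBall x r) := by
          gcongr ?_ * _
          exact antitone_ennreal_rpow_neg hs hscale
      _ ≤ rieszPotential s (2 * ENNReal.ofReal δ) μ z :=
          rpow_neg_mul_measure_closedBall_le_rieszPotential hs _ μ hz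
      _ ≤ ENNReal.ofReal T := hT.le
  calc μ (closedBall x r)
      = ENNReal.ofReal ((4 * r) ^ s) * (ENNReal.ofReal ((4 * r) ^ (-s)) * μ (closedBall x r)) := by
        rw [← mul_assoc, ← ENNReal.ofReal_mul (by positivity), ← Real.rpow_add (by positivity)]
        simp
    _ ≤ ENNReal.ofReal ((4 * r) ^ s) * ENNReal.ofReal T := by gcongr
    _ = ENNReal.ofReal ((4 * r) ^ s * T) := (ENNReal.ofReal_mul (by positivity)).symm

variable [SecondCountableTopology X]

theorem measurable_rieszPotential (s : ℝ) (ρ : ℝ≥0∞) (μ : Measure X) [SFinite μ] :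
    Measurable (rieszPotential s ρ μ) :=
  Measurable.lintegral_prod_right' (f := fun q : X × X => (edist q.1 q.2 + ρ) ^ (-s)) (by fun_prop)

theorem exists_frostman_of_rieszEnergy_le (μ : Measure X) [SFinite μ] {s δ K ε : ℝ} (hs : 0 ≤ s)
    (hδ : 0 < δ)
    (hE : rieszEnergy s (2 * ENNReal.ofReal δ) μ ≤ ENNReal.ofReal (K * δ ^ (-ε))) :
    ∃ A, MeasurableSet A ∧ μ Aᶜ ≤ ENNReal.ofReal (4 ^ s * K * δ ^ ε) ∧
      ∀ x r, δ ≤ r → μ.restrict A (closedBall x r) ≤ ENNReal.ofReal (δ ^ (-2 * ε) * r ^ s) := by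
  set U := rieszPotential s (2 * ENNReal.ofReal δ) μ
  have hU : Measurable U := measurable_rieszPotential ..
  set T : ℝ := 4 ^ (-s) * δ ^ (-2 * ε)
  have hT : 0 < T := by positivity
  have h4 : (4 : ℝ) ^ s * 4 ^ (-s) = 1 := by rw [← Real.rpow_add (by norm_num)]; simp
  refine ⟨{z | U z < ENNReal.ofReal T}, measurableSet_lt hU measurable_const, ?_, fun x r hr => ?_⟩
  · have hKT : K * δ ^ (-ε) = 4 ^ s * K * δ ^ ε * T := by
      have hδε : δ ^ (-ε) = δ ^ ε * δ ^ (-2 * ε) := by rw [← Real.rpow_add hδ]; ring_nf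
      linear_combination K * hδε - K * δ ^ ε * δ ^ (-2 * ε) * h4
    have hcompl : {z | U z < ENNReal.ofReal T}ᶜ = {z | ENNReal.ofReal T ≤ U z} := by ext; simp
    rw [hcompl]
    refine (meas_ge_le_lintegral_div hU.aemeasurable (by simpa using hT)
      ENNReal.ofReal_ne_top).trans (ENNReal.div_le_of_le_mul ?_)
    rwa [← ENNReal.ofReal_mul' hT.le, ← hKT]
  · have hrT : (4 * r) ^ s * T = δ ^ (-2 * ε) * r ^ s := by
      rw [Real.mul_rpow (by norm_num) (hδ.trans_le hr).le]
      linear_combination r ^ s * δ ^ (-2 * ε) * h4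
    rw [Measure.restrict_apply measurableSet_closedBall, ← hrT]
    rcases (closedBall x r ∩ {z | U z < ENNReal.ofReal T}).eq_empty_or_nonempty with
      hempty | ⟨z, hzr, hzT⟩
    · simp [hempty]
    · exact (measure_mono inter_subset_left).trans
        (measure_closedBall_le_of_rieszPotential_lt hs hδ hr hzr hzT)

end Riesz

section Convolution

variable {G : Type*} [SeminormedAddCommGroup G] [MeasurableSpace G] [BorelSpace G]
  [SecondCountableTopology G]

theorem measure_univ_mul_rieszPotential_le_rieszPotential_conv (μ η : Measure G) [SFinite η]
    {s : ℝ} (hs : 0 ≤ s) (ρ : ℝ≥0∞) {δ : ℝ≥0∞} (hη : ∀ᵐ u ∂η, ‖u‖ₑ ≤ δ) (z : G) {u : G}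
    (hu : ‖u‖ₑ ≤ δ) :
    η univ * rieszPotential s (ρ + 2 * δ) μ z ≤ rieszPotential s ρ (μ ∗ η) (z + u) := by
  simp only [rieszPotential]
  rw [Measure.lintegral_conv (by fun_prop), ← lintegral_const_mul _ (by fun_prop)]
  refine lintegral_mono fun w => ?_
  rw [mul_comm, ← lintegral_const]
  refine lintegral_mono_ae ?_
  filter_upwards [hη] with v hv
  refine antitone_ennreal_rpow_neg hs ?_
  calc edist (z + u) (w + v) + ρ ≤ edist z w + edist u v + ρ := by
        gcongr; exact edist_add_add_le ..
    _ ≤ edist z w + (‖u‖ₑ + ‖v‖ₑ) + ρ := by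
        gcongr; exact (edist_eq_enorm_sub u v).trans_le enorm_sub_le
    _ ≤ edist z w + (δ + δ) + ρ := by gcongr
    _ = edist z w + (ρ + 2 * δ) := by ring

theorem sq_measure_univ_mul_rieszEnergy_le_rieszEnergy_conv (μ η : Measure G) [SFinite μ]
    [SFinite η] {s : ℝ} (hs : 0 ≤ s) (ρ : ℝ≥0∞) {δ : ℝ≥0∞} (hη : ∀ᵐ u ∂η, ‖u‖ₑ ≤ δ) :
    η univ ^ 2 * rieszEnergy s (ρ + 2 * δ) μ ≤ rieszEnergy s ρ (μ ∗ η) := by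
  have hU := measurable_rieszPotential s (ρ + 2 * δ) μ
  simp only [rieszEnergy]
  rw [Measure.lintegral_conv (measurable_rieszPotential ..), ← lintegral_const_mul _ hU]
  refine lintegral_mono fun z => ?_
  rw [sq, mul_assoc, mul_comm, ← lintegral_const]
  refine lintegral_mono_ae ?_
  filter_upwards [hη] with u hu
  exact measure_univ_mul_rieszPotential_le_rieszPotential_conv μ η hs ρ hη z hu

end Convolution

section Density

variable {X : Type*} [MetricSpace X] [MeasurableSpace X] [OpensMeasurableSpace X]
  [SecondCountableTopology X] (ν : Measure X) [SFinite ν] [NullSingletonClass ν] {s : ℝ}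
  {F : X → ℝ}

theorem rieszEnergy_withDensity_eq_lintegral_prod (hF : Measurable F) (hF0 : ∀ x, 0 ≤ F x) :
    rieszEnergy s 0 (ν.withDensity fun x => ENNReal.ofReal (F x)) =
      ∫⁻ q : X × X, ENNReal.ofReal (F q.1 * F q.2 * dist q.1 q.2 ^ (-s)) ∂ν.prod ν := by
  rw [rieszEnergy, lintegral_withDensity_eq_lintegral_mul _ (by fun_prop)
    (measurable_rieszPotential ..), lintegral_prod _ (by fun_prop)]
  refine lintegral_congr fun x => ?_
  simp only [Pi.mul_apply, rieszPotential, add_zero]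
  rw [lintegral_withDensity_eq_lintegral_mul _ (by fun_prop) (by fun_prop),
    ← lintegral_const_mul _ (by fun_prop)]
  refine lintegral_congr_ae ?_
  filter_upwards [Measure.ae_ne ν x] with y hy
  rw [Pi.mul_apply, edist_dist, ENNReal.ofReal_rpow_of_pos (dist_pos.2 hy.symm), mul_assoc,
    ENNReal.ofReal_mul (hF0 x), ENNReal.ofReal_mul (hF0 y)]

theorem rieszEnergy_withDensity_eq_ofReal_integral (hF : Measurable F) (hF0 : ∀ x, 0 ≤ F x)
    (hfin : rieszEnergy s 0 (ν.withDensity fun x => ENNReal.ofReal (F x)) ≠ ∞) :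
    rieszEnergy s 0 (ν.withDensity fun x => ENNReal.ofReal (F x)) =
      ENNReal.ofReal (∫ x, ∫ y, F x * F y * dist x y ^ (-s) ∂ν ∂ν) := by
  have heq := rieszEnergy_withDensity_eq_lintegral_prod (s := s) ν hF hF0
  have hnonneg : ∀ q : X × X, 0 ≤ F q.1 * F q.2 * dist q.1 q.2 ^ (-s) := fun q =>
    mul_nonneg (mul_nonneg (hF0 _) (hF0 _)) (by positivity)
  have hint : Integrable (fun q : X × X => F q.1 * F q.2 * dist q.1 q.2 ^ (-s)) (ν.prod ν) := by
    refine ⟨Measurable.aestronglyMeasurable (by fun_prop), ?_⟩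
    rw [hasFiniteIntegral_iff_ofReal (ae_of_all _ hnonneg), ← heq]
    exact hfin.lt_top
  rw [heq, ← ofReal_integral_eq_lintegral_ofReal hint (ae_of_all _ hnonneg),
    integral_prod _ hint]

end Density

section BoundedDensity

variable {E : Type*} [NormedAddCommGroup E] [NormedSpace ℝ E] [FiniteDimensional ℝ E]
  [MeasurableSpace E] [BorelSpace E] (ν : Measure E) [ν.IsAddHaarMeasure] {s : ℝ}

theorem setLIntegral_ball_enorm_rpow_neg_lt_top (hd : 0 < finrank ℝ E) (hsd : s < finrank ℝ E)
    (r : ℝ) :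
    ∫⁻ u in ball (0 : E) r, ‖u‖ₑ ^ (-s) ∂ν < ∞ := by
  have : Nontrivial E := nontrivial_of_finrank_pos (R := ℝ) hd
  have hint : IntegrableOn (fun u : E => ‖u‖ ^ (-s)) (ball 0 r) ν :=
    integrableOn_ball_of_norm_le_rpow (C := 1) hd hsd
      (ae_of_all _ fun u => by rw [one_mul, Real.norm_of_nonneg (by positivity)])
      (Measurable.aestronglyMeasurable (by fun_prop))
  refine (lintegral_congr_ae ?_).trans_lt hint.lintegral_lt_top
  filter_upwards [ae_restrict_of_ae (Measure.ae_ne ν 0)] with u hu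
  rw [← ofReal_norm, ENNReal.ofReal_rpow_of_pos (norm_pos_iff.2 hu)]

theorem rieszPotential_withDensity_le (hs : 0 ≤ s) {f : E → ℝ≥0∞} (hf : Measurable f) {M : ℝ≥0∞}
    (hM : ∀ x, f x ≤ M) (x : E) :
    rieszPotential s 0 (ν.withDensity f) x ≤
      M * ∫⁻ u in ball (0 : E) 1, ‖u‖ₑ ^ (-s) ∂ν + ∫⁻ y, f y ∂ν := by
  have hker : Measurable ((ball (0 : E) 1).indicator fun u => ‖u‖ₑ ^ (-s)) :=
    Measurable.indicator (by fun_prop) measurableSet_ball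
  rw [rieszPotential, lintegral_withDensity_eq_lintegral_mul _ hf (by fun_prop),
    ← lintegral_indicator measurableSet_ball, ← lintegral_sub_left_eq_self (indicator _ _) x,
    ← lintegral_const_mul _ (by fun_prop), ← lintegral_add_right _ hf]
  refine lintegral_mono fun y => ?_
  simp only [Pi.mul_apply, add_zero, edist_eq_enorm_sub]
  by_cases hxy : x - y ∈ ball (0 : E) 1
  · rw [indicator_of_mem hxy]
    exact le_add_right (by gcongr; exact hM y)
  · have hone : 1 ≤ ‖x - y‖ₑ := by
      rw [← ofReal_norm, ENNReal.one_le_ofReal]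
      simpa using hxy
    refine le_add_left (mul_le_of_le_one_right' ?_)
    simpa using antitone_ennreal_rpow_neg hs hone

theorem rieszEnergy_withDensity_ne_top (hs : 0 < s) (hsd : s < finrank ℝ E) {f : E → ℝ≥0∞}
    (hf : Measurable f) {M : ℝ≥0∞} (hM : ∀ x, f x ≤ M) (hMtop : M ≠ ∞)
    (hfint : ∫⁻ x, f x ∂ν ≠ ∞) : rieszEnergy s 0 (ν.withDensity f) ≠ ∞ := by
  have hd : 0 < finrank ℝ E := by exact_mod_cast hs.trans hsd
  have hK := (setLIntegral_ball_enorm_rpow_neg_lt_top ν hd hsd 1).ne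
  refine ne_top_of_le_ne_top ?_ (lintegral_mono (rieszPotential_withDensity_le ν hs.le hf hM))
  rw [lintegral_const, withDensity_apply _ .univ, setLIntegral_univ]
  finiteness

end BoundedDensity

section Mollifier

variable {E : Type*} [NormedAddCommGroup E] [NormedSpace ℝ E]

/-- The rescaled profile `P_δ = δ^{-d} P(·/δ)`, where `d` is the dimension of the space. -/
noncomputable def mollifier (P : E → ℝ) (δ : ℝ) (x : E) : ℝ :=
  δ ^ (-(finrank ℝ E : ℝ)) * P (δ⁻¹ • x)

/-- The density of `μ * P_δ`. -/
noncomputable def mollify [MeasurableSpace E] (P : E → ℝ) (δ : ℝ) (μ : Measure E) (x : E) : ℝ :=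
  ∫ z, mollifier P δ (x - z) ∂μ

variable {P : E → ℝ} {δ : ℝ}

theorem mollifier_nonneg (hP0 : ∀ x, 0 ≤ P x) (hδ : 0 < δ) (x : E) : 0 ≤ mollifier P δ x :=
  mul_nonneg (by positivity) (hP0 _)

theorem mollifier_le {M : ℝ} (hPM : ∀ x, P x ≤ M) (hδ : 0 < δ) (x : E) :
    mollifier P δ x ≤ δ ^ (-(finrank ℝ E : ℝ)) * M :=
  mul_le_mul_of_nonneg_left (hPM _) (by positivity)

theorem mollifier_eq_zero (hP : ∀ x, 1 < ‖x‖ → P x = 0) (hδ : 0 < δ) {x : E} (hx : δ < ‖x‖) :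
    mollifier P δ x = 0 := by
  rw [mollifier, hP, mul_zero]
  rwa [norm_smul, norm_inv, Real.norm_of_nonneg hδ.le, lt_inv_mul_iff₀ hδ, mul_one]

variable [MeasurableSpace E] [BorelSpace E]

@[fun_prop]
theorem measurable_mollifier (hP : Measurable P) (δ : ℝ) : Measurable (mollifier P δ) := by
  unfold mollifier
  fun_prop

theorem ofReal_mollify (hP : Measurable P) (hP0 : ∀ x, 0 ≤ P x) {M : ℝ} (hPM : ∀ x, P x ≤ M)
    (hδ : 0 < δ) (μ : Measure E) [IsFiniteMeasure μ] (x : E) :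
    ENNReal.ofReal (mollify P δ μ x) = ∫⁻ z, ENNReal.ofReal (mollifier P δ (x - z)) ∂μ := by
  have hnonneg := mollifier_nonneg hP0 hδ
  refine ofReal_integral_eq_lintegral_ofReal ?_ (ae_of_all _ fun z => hnonneg _)
  refine Integrable.of_bound (Measurable.aestronglyMeasurable (by fun_prop))
    (δ ^ (-(finrank ℝ E : ℝ)) * M) (ae_of_all _ fun z => ?_)
  rw [Real.norm_of_nonneg (hnonneg _)]
  exact mollifier_le hPM hδ _

variable [FiniteDimensional ℝ E]

theorem measurable_mollify (hP : Measurable P) (δ : ℝ) (μ : Measure E) [SFinite μ] :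
    Measurable (mollify P δ μ) := by
  have hjoint : Measurable fun q : E × E => mollifier P δ (q.1 - q.2) := by fun_prop
  exact hjoint.stronglyMeasurable.integral_prod_right.measurable

variable (ν : Measure E) [ν.IsAddHaarMeasure]

theorem lintegral_mollifier (hP : Measurable P) (hδ : 0 < δ) :
    ∫⁻ x, ENNReal.ofReal (mollifier P δ x) ∂ν = ∫⁻ x, ENNReal.ofReal (P x) ∂ν := by
  have hscale : ∫⁻ x, ENNReal.ofReal (P (δ⁻¹ • x)) ∂ν =
      ENNReal.ofReal (δ ^ finrank ℝ E) * ∫⁻ x, ENNReal.ofReal (P x) ∂ν := by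
    rw [← lintegral_map (f := fun x => ENNReal.ofReal (P x)) (by fun_prop) (by fun_prop),
      Measure.map_addHaar_smul ν (inv_ne_zero hδ.ne'), lintegral_smul_measure, smul_eq_mul,
      inv_pow, inv_inv, abs_of_pos (by positivity)]
  simp only [mollifier, ENNReal.ofReal_mul (Real.rpow_nonneg hδ.le _)]
  rw [lintegral_const_mul _ (by fun_prop), hscale, ← mul_assoc,
    ← ENNReal.ofReal_mul (by positivity), ← Real.rpow_natCast, ← Real.rpow_add hδ]
  simp

theorem rieszEnergy_conv_mollifier (hP : Measurable P) (hP0 : ∀ x, 0 ≤ P x) {M : ℝ}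
    (hPM : ∀ x, P x ≤ M) (hPint : Integrable P ν) (hδ : 0 < δ) {s : ℝ} (hs : 0 < s)
    (hsd : s < finrank ℝ E) (μ : Measure E) [IsFiniteMeasure μ] :
    rieszEnergy s 0 (μ ∗ ν.withDensity fun x => ENNReal.ofReal (mollifier P δ x)) =
      ENNReal.ofReal (∫ x, ∫ y, mollify P δ μ x * mollify P δ μ y * dist x y ^ (-s) ∂ν ∂ν) := by
  have : Nontrivial E := nontrivial_of_finrank_pos (R := ℝ) (by exact_mod_cast hs.trans hsd)
  have hconv : μ ∗ ν.withDensity (fun x => ENNReal.ofReal (mollifier P δ x)) =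
      ν.withDensity fun x => ENNReal.ofReal (mollify P δ μ x) := by
    simp only [conv_withDensity_right μ ν (measurable_mollifier hP δ).ennreal_ofReal,
      ofReal_mollify hP hP0 hPM hδ]
  have hbound : ∀ x, ENNReal.ofReal (mollify P δ μ x) ≤
      ENNReal.ofReal (δ ^ (-(finrank ℝ E : ℝ)) * M) * μ univ := fun x => by
    rw [ofReal_mollify hP hP0 hPM hδ, ← lintegral_const]
    exact lintegral_mono fun z => ENNReal.ofReal_le_ofReal (mollifier_le hPM hδ _)
  have hmass : ∫⁻ x, ENNReal.ofReal (mollify P δ μ x) ∂ν ≠ ∞ := by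
    have hη : IsFiniteMeasure (ν.withDensity fun x => ENNReal.ofReal (mollifier P δ x)) :=
      isFiniteMeasure_withDensity (by
        rw [lintegral_mollifier ν hP hδ]; exact hPint.lintegral_lt_top.ne)
    rw [← setLIntegral_univ, ← withDensity_apply _ .univ, ← hconv]
    exact measure_ne_top _ _
  have hmeas := measurable_mollify hP δ μ
  rw [hconv]
  exact rieszEnergy_withDensity_eq_ofReal_integral ν hmeas
    (fun x => integral_nonneg fun z => mollifier_nonneg hP0 hδ _)
    (rieszEnergy_withDensity_ne_top ν hs hsd hmeas.ennreal_ofReal hbound (by finiteness) hmass)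

theorem sq_lintegral_mul_rieszEnergy_le_mollify (hP : Measurable P) (hP0 : ∀ x, 0 ≤ P x) {M : ℝ}
    (hPM : ∀ x, P x ≤ M) (hPsupp : ∀ x, 1 < ‖x‖ → P x = 0) (hPint : Integrable P ν)
    (hδ : 0 < δ) {s : ℝ} (hs : 0 < s) (hsd : s < finrank ℝ E) (μ : Measure E)
    [IsFiniteMeasure μ] :
    (∫⁻ x, ENNReal.ofReal (P x) ∂ν) ^ 2 * rieszEnergy s (2 * ENNReal.ofReal δ) μ ≤
      ENNReal.ofReal (∫ x, ∫ y, mollify P δ μ x * mollify P δ μ y * dist x y ^ (-s) ∂ν ∂ν) := by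
  have hsupp : ∀ᵐ u ∂ν.withDensity fun x => ENNReal.ofReal (mollifier P δ x),
      ‖u‖ₑ ≤ ENNReal.ofReal δ := by
    rw [ae_withDensity_iff (by fun_prop)]
    refine ae_of_all _ fun u hu => ?_
    rw [← ofReal_norm]
    contrapose! hu
    rw [mollifier_eq_zero hPsupp hδ (lt_of_not_ge fun h => hu.not_ge (ENNReal.ofReal_le_ofReal h)),
      ENNReal.ofReal_zero]
  have henergy := sq_measure_univ_mul_rieszEnergy_le_rieszEnergy_conv μ _ hs.le 0 hsupp
  rwa [rieszEnergy_conv_mollifier ν hP hP0 hPM hPint hδ hs hsd, zero_add,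
    withDensity_apply _ .univ, setLIntegral_univ, lintegral_mollifier ν hP hδ] at henergy

theorem rieszEnergy_le_of_mollify_le (hP : Measurable P)
    (hlow : ∀ x, indicator (closedBall 0 (1 / 2)) 1 x ≤ P x)
    (hup : ∀ x, P x ≤ indicator (closedBall 0 1) 1 x) (hδ : 0 < δ) {s : ℝ} (hs : 0 < s)
    (hsd : s < finrank ℝ E) (μ : Measure E) [IsFiniteMeasure μ] {B : ℝ}
    (hE : ∫ x, ∫ y, mollify P δ μ x * mollify P δ μ y * dist x y ^ (-s) ∂ν ∂ν ≤ B) :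
    rieszEnergy s (2 * ENNReal.ofReal δ) μ ≤
      ENNReal.ofReal ((ν.real (closedBall 0 (1 / 2)) ^ 2)⁻¹ * B) := by
  have hP0 : ∀ x, 0 ≤ P x := fun x => (indicator_nonneg (fun _ _ => zero_le_one) x).trans (hlow x)
  have hP1 : ∀ x, P x ≤ 1 := fun x =>
    (hup x).trans (indicator_le_self' (fun _ _ => zero_le_one) x)
  have hPsupp : ∀ x, 1 < ‖x‖ → P x = 0 := fun x hx =>
    ((hup x).trans_eq (indicator_of_notMem (by simpa using hx) _)).antisymm (hP0 x)
  have hPint : Integrable P ν := by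
    refine Integrable.mono' (g := indicator (closedBall 0 1) 1) ?_ hP.aestronglyMeasurable
      (ae_of_all _ fun x => by rw [Real.norm_of_nonneg (hP0 x)]; exact hup x)
    exact (integrable_indicator_iff measurableSet_closedBall).2
      (integrableOn_const measure_closedBall_lt_top.ne)
  have hPmass : ν (closedBall 0 (1 / 2)) ≤ ∫⁻ x, ENNReal.ofReal (P x) ∂ν := by
    rw [← lintegral_indicator_one measurableSet_closedBall]
    refine lintegral_mono (indicator_le fun x hx => ?_)
    simpa only [indicator_of_mem hx, Pi.one_apply, ENNReal.one_le_ofReal] using hlow x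
  have hv0 : ν (closedBall 0 (1 / 2)) ≠ 0 := (measure_closedBall_pos ν _ (by norm_num)).ne'
  have hvtop : ν (closedBall 0 (1 / 2)) ≠ ∞ := measure_closedBall_lt_top.ne
  have hv : 0 < ν.real (closedBall 0 (1 / 2)) := ENNReal.toReal_pos hv0 hvtop
  rw [inv_mul_eq_div, ENNReal.ofReal_div_of_pos (by positivity), ENNReal.ofReal_pow hv.le,
    ofReal_measureReal hvtop,
    ENNReal.le_div_iff_mul_le (.inl (pow_ne_zero 2 hv0)) (.inl (ENNReal.pow_ne_top hvtop))]
  calc rieszEnergy s (2 * ENNReal.ofReal δ) μ * ν (closedBall 0 (1 / 2)) ^ 2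
      ≤ (∫⁻ x, ENNReal.ofReal (P x) ∂ν) ^ 2 * rieszEnergy s (2 * ENNReal.ofReal δ) μ := by
        rw [mul_comm]; gcongr
    _ ≤ ENNReal.ofReal (∫ x, ∫ y, mollify P δ μ x * mollify P δ μ y * dist x y ^ (-s) ∂ν ∂ν) :=
        sq_lintegral_mul_rieszEnergy_le_mollify ν hP hP0 hP1 hPsupp hPint hδ hs hsd μ
    _ ≤ ENNReal.ofReal B := ENNReal.ofReal_le_ofReal hE

theorem stmt4_general {s : ℝ} (hs : 0 < s)
    (hsd : s < finrank ℝ E) :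
    ∃ δ₀ > 0, ∀ P : E → ℝ, Measurable P →
      (∀ x, indicator (closedBall 0 (1 / 2)) 1 x ≤ P x) →
      (∀ x, P x ≤ indicator (closedBall 0 1) 1 x) →
      ∀ δ, 0 < δ → δ ≤ δ₀ → ∀ (ε : ℝ) (μ : Measure E), IsFiniteMeasure μ →
      ∫ x, ∫ y, mollify P δ μ x * mollify P δ μ y * dist x y ^ (-s) ∂ν ∂ν ≤ δ ^ (-ε) →
      ∃ A, MeasurableSet A ∧
        ENNReal.ofReal (μ.real univ - Real.log (1 / δ) * δ ^ ε) ≤ μ A ∧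
        ∀ x r, δ ≤ r → μ.restrict A (closedBall x r) ≤ ENNReal.ofReal (δ ^ (-2 * ε) * r ^ s) := by
  set K : ℝ := (ν.real (closedBall 0 (1 / 2)) ^ 2)⁻¹
  refine ⟨Real.exp (-(4 ^ s * K)), Real.exp_pos _, fun P hP hlow hup δ hδ hδ₀ ε μ _ hE => ?_⟩
  have hlog : 4 ^ s * K ≤ Real.log (1 / δ) := by
    rw [one_div, Real.log_inv, le_neg]
    exact (Real.log_le_iff_le_exp hδ).2 hδ₀
  obtain ⟨A, hA, hAc, hfrostman⟩ := exists_frostman_of_rieszEnergy_le μ hs.le hδ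
    (rieszEnergy_le_of_mollify_le ν hP hlow hup hδ hs hsd μ hE)
  refine ⟨A, hA, ?_, hfrostman⟩
  have hlog0 : 0 ≤ Real.log (1 / δ) := le_trans (by positivity) hlog
  rw [ENNReal.ofReal_sub _ (by positivity), ofReal_measureReal, tsub_le_iff_right,
    ← measure_add_measure_compl hA]
  gcongr
  exact hAc.trans (ENNReal.ofReal_le_ofReal (by gcongr))

end Mollifier

/-- If a probability measure `μ` on the unit ball of `ℝ^d` has small `s`-energy at scale `δ`,
`I_s^δ(μ) ≤ δ^{-ε}`, then there is a set `A` of measure `≥ 1 - (log 1/δ)·δ^ε` on which the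
restricted measure satisfies the Frostman bound `μ|_A(B(x,r)) ≤ C δ^{-2ε} r^s` for
`r ∈ [δ, 1]`, with an absolute constant `C`. -/
theorem stmt4 :
    ∃ C > (0:ℝ), ∀ d : ℕ, 0 < d → ∀ s : ℝ, 0 < s → s < d →
      ∀ ε : ℝ, 0 < ε → ε ≤ 1 / 2 →
      ∀ P : EuclideanSpace ℝ (Fin d) → ℝ,
      (∀ x y : EuclideanSpace ℝ (Fin d), ‖x‖ ≤ ‖y‖ → P y ≤ P x) →
      (∀ x, Set.indicator (Metric.closedBall (0 : EuclideanSpace ℝ (Fin d)) (1 / 2)) 1 x ≤ P x) →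
      (∀ x, P x ≤ Set.indicator (Metric.closedBall (0 : EuclideanSpace ℝ (Fin d)) 1) 1 x) →
      ∃ δ₀ > (0:ℝ), ∀ δ : ℝ, 0 < δ → δ ≤ δ₀ →
      ∀ μ : Measure (EuclideanSpace ℝ (Fin d)), IsProbabilityMeasure μ →
      μ (Metric.closedBall 0 1)ᶜ = 0 →
      (∫ x : EuclideanSpace ℝ (Fin d), ∫ y : EuclideanSpace ℝ (Fin d),
          (∫ z, δ ^ (-(d:ℝ)) * P (δ⁻¹ • (x - z)) ∂μ) *
          (∫ z, δ ^ (-(d:ℝ)) * P (δ⁻¹ • (y - z)) ∂μ) * ‖x - y‖ ^ (-s)) ≤ δ ^ (-ε) →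
      ∃ A : Set (EuclideanSpace ℝ (Fin d)), MeasurableSet A ∧
        ENNReal.ofReal (1 - Real.log (1 / δ) * δ ^ ε) ≤ μ A ∧
        ∀ (x : EuclideanSpace ℝ (Fin d)) (r : ℝ), r ∈ Set.Icc δ 1 →
          μ.restrict A (Metric.closedBall x r) ≤ ENNReal.ofReal (C * δ ^ (-2 * ε) * r ^ s) := by
  refine ⟨1, one_pos, fun d _ s hs hsd ε _ _ P hP hlow hup => ?_⟩
  obtain ⟨δ₀, hδ₀, h⟩ := stmt4_general (volume : Measure (EuclideanSpace ℝ (Fin d))) hs (by simpa)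
  refine ⟨δ₀, hδ₀, fun δ hδ hδδ₀ μ _ _ hE => ?_⟩
  obtain ⟨A, hA, hμA, hfrostman⟩ := h P (measurable_of_antitone_comp measurable_norm hP) hlow hup δ
    hδ hδδ₀ ε μ inferInstance (by simpa [mollify, mollifier, dist_eq_norm] using hE)
  exact ⟨A, hA, by simpa using hμA, fun x r hr => by simpa using hfrostman x r hr.1⟩
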